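/- arXiv:1301.0838 — 4 statements merged into one kernel-verified Lean document; each statement's English description precedes it below -/
import Mathlib

section
/- Let A be a connected superbialgebra over K (i.e., the even part A₀ equals K·1, where 1 is the unit of A). Then the product of any two odd elements vanishes: for all x, y ∈ A₁ one has x·y = 0 and y·x = 0. -/
open TensorProduct

section SuperDefs

variable (K A : Type*) [Field K] [Ring A] [Algebra K A]

/-- A superalgebra structure on the unital associative `K`-algebra `A`: a `ℤ/2ℤ`-grading
`A = A₀ ⊕ A₁` of `K`-vector spaces with `1 ∈ A₀` and `Aᵢ · Aⱼ ⊆ A_{i+j mod 2}`. -/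
structure SuperAlgebra where
  A₀ : Submodule K A
  A₁ : Submodule K A
  compl : IsCompl A₀ A₁
  one_mem : (1 : A) ∈ A₀
  mul_mem₀₀ : ∀ a ∈ A₀, ∀ b ∈ A₀, a * b ∈ A₀
  mul_mem₀₁ : ∀ a ∈ A₀, ∀ b ∈ A₁, a * b ∈ A₁
  mul_mem₁₀ : ∀ a ∈ A₁, ∀ b ∈ A₀, a * b ∈ A₁
  mul_mem₁₁ : ∀ a ∈ A₁, ∀ b ∈ A₁, a * b ∈ A₀

namespace SuperAlgebra

variable {K A}

/-- The projection onto the even part along the odd part. -/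
noncomputable def p₀ (S : SuperAlgebra K A) : A →ₗ[K] A :=
  S.A₀.subtype ∘ₗ Submodule.linearProjOfIsCompl S.A₀ S.A₁ S.compl

/-- The projection onto the odd part along the even part. -/
noncomputable def p₁ (S : SuperAlgebra K A) : A →ₗ[K] A :=
  S.A₁.subtype ∘ₗ Submodule.linearProjOfIsCompl S.A₁ S.A₀ S.compl.symm

/-- The superflip `τ : A ⊗ A → A ⊗ A`, `a ⊗ b ↦ (-1)^{|a||b|} b ⊗ a` on homogeneous
elements. -/
noncomputable def τ (S : SuperAlgebra K A) : A ⊗[K] A →ₗ[K] A ⊗[K] A :=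
  (TensorProduct.comm K A A).toLinearMap ∘ₗ
    (TensorProduct.map S.p₀ S.p₀ + TensorProduct.map S.p₀ S.p₁ +
      TensorProduct.map S.p₁ S.p₀ - TensorProduct.map S.p₁ S.p₁)

variable (K A) in
/-- Regrouping `(A ⊗ A) ⊗ (A ⊗ A) ≃ A ⊗ ((A ⊗ A) ⊗ A)`. -/
noncomputable def rearr : ((A ⊗[K] A) ⊗[K] (A ⊗[K] A)) ≃ₗ[K] (A ⊗[K] ((A ⊗[K] A) ⊗[K] A)) :=
  (TensorProduct.assoc K A A (A ⊗[K] A)) ≪≫ₗ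
    TensorProduct.congr (LinearEquiv.refl K A) (TensorProduct.assoc K A A A).symm

/-- The map `(μ ⊗ μ) ∘ (id ⊗ τ ⊗ id) : (A ⊗ A) ⊗ (A ⊗ A) → A ⊗ A`, i.e. the super
multiplication of `A ⊗ A`. -/
noncomputable def superBimul (S : SuperAlgebra K A) :
    ((A ⊗[K] A) ⊗[K] (A ⊗[K] A)) →ₗ[K] A ⊗[K] A :=
  TensorProduct.map (LinearMap.mul' K A) (LinearMap.mul' K A) ∘ₗ
    (rearr K A).symm.toLinearMap ∘ₗ
    TensorProduct.map (LinearMap.id : A →ₗ[K] A)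
      (TensorProduct.map S.τ (LinearMap.id : A →ₗ[K] A)) ∘ₗ
    (rearr K A).toLinearMap

/-- The even part of `A ⊗ A` for the total grading. -/
def evenTensor (S : SuperAlgebra K A) : Submodule K (A ⊗[K] A) :=
  LinearMap.range (TensorProduct.map S.A₀.subtype S.A₀.subtype) ⊔
    LinearMap.range (TensorProduct.map S.A₁.subtype S.A₁.subtype)

/-- The odd part of `A ⊗ A` for the total grading. -/
def oddTensor (S : SuperAlgebra K A) : Submodule K (A ⊗[K] A) :=
  LinearMap.range (TensorProduct.map S.A₀.subtype S.A₁.subtype) ⊔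
    LinearMap.range (TensorProduct.map S.A₁.subtype S.A₀.subtype)

end SuperAlgebra

/-- A superbialgebra over `K`: a superalgebra together with grading-preserving linear maps
`Δ : A → A ⊗ A` and `ε : A → K` satisfying coassociativity, counity, and compatibility
with the (super)algebra structure. -/
structure SuperBialgebra extends SuperAlgebra K A where
  Δ : A →ₗ[K] A ⊗[K] A
  ε : A →ₗ[K] K
  Δ_even : ∀ a ∈ A₀, Δ a ∈ toSuperAlgebra.evenTensor
  Δ_odd : ∀ a ∈ A₁, Δ a ∈ toSuperAlgebra.oddTensor
  ε_odd : ∀ a ∈ A₁, ε a = 0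
  coassoc : ∀ a : A,
    TensorProduct.assoc K A A A (TensorProduct.map Δ (LinearMap.id : A →ₗ[K] A) (Δ a)) =
      TensorProduct.map (LinearMap.id : A →ₗ[K] A) Δ (Δ a)
  counit_left : ∀ a : A,
    TensorProduct.lid K A (TensorProduct.map ε (LinearMap.id : A →ₗ[K] A) (Δ a)) = a
  counit_right : ∀ a : A,
    TensorProduct.rid K A (TensorProduct.map (LinearMap.id : A →ₗ[K] A) ε (Δ a)) = a
  Δ_one : Δ 1 = 1 ⊗ₜ[K] 1
  ε_one : ε 1 = 1
  ε_mul : ∀ a b : A, ε (a * b) = ε a * ε b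
  Δ_mul : ∀ a b : A, Δ (a * b) = toSuperAlgebra.superBimul (Δ a ⊗ₜ[K] Δ b)

/-- A Hopf superalgebra: a superbialgebra with a grading-preserving antipode `S`
satisfying `μ ∘ (S ⊗ id) ∘ Δ = μ ∘ (id ⊗ S) ∘ Δ = η ∘ ε`. -/
structure HopfSuperalgebra extends SuperBialgebra K A where
  antipode : A →ₗ[K] A
  antipode_even : ∀ a ∈ A₀, antipode a ∈ A₀
  antipode_odd : ∀ a ∈ A₁, antipode a ∈ A₁
  antipode_left : ∀ a : A,
    LinearMap.mul' K A (TensorProduct.map antipode (LinearMap.id : A →ₗ[K] A) (Δ a)) =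
      algebraMap K A (ε a)
  antipode_right : ∀ a : A,
    LinearMap.mul' K A (TensorProduct.map (LinearMap.id : A →ₗ[K] A) antipode (Δ a)) =
      algebraMap K A (ε a)

end SuperDefs

/-! In a connected superalgebra the product of two odd elements is even, hence a scalar multiple
of `1`. A unital functional determines that scalar, and a counit, being multiplicative and zero on
the odd part, sends the product to `0`. -/

theorem eq_smul_of_mem_span_singleton {R M : Type*} [Semiring R] [AddCommMonoid M] [Module R M]
    (f : M →ₗ[R] R) {v a : M} (hv : f v = 1) (ha : a ∈ Submodule.span R {v}) :
    a = f a • v := by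
  obtain ⟨c, rfl⟩ := Submodule.mem_span_singleton.mp ha
  rw [map_smul, hv, smul_eq_mul, mul_one]

theorem connected_superbialgebra_odd_mul_eq_zero_general
    {K A : Type*} [Field K] [Ring A] [Algebra K A] (S : SuperAlgebra K A) (ε : A →ₐ[K] K)
    (ε_odd : ∀ a ∈ S.A₁, ε a = 0) (hconn : S.A₀ = Submodule.span K {(1 : A)}) :
    ∀ x ∈ S.A₁, ∀ y ∈ S.A₁, x * y = 0 := by
  intro x hx y hy
  have hxy : x * y ∈ Submodule.span K {(1 : A)} := hconn ▸ S.mul_mem₁₁ x hx y hy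
  calc
    x * y = ε (x * y) • (1 : A) :=
      eq_smul_of_mem_span_singleton ε.toLinearMap (map_one ε) hxy
    _ = 0 := by rw [map_mul, ε_odd x hx, zero_mul, zero_smul]

/-- in a connected superbialgebra the product of any two odd elements
vanishes. -/
theorem connected_superbialgebra_odd_mul_eq_zero
    {K A : Type*} [Field K] [IsAlgClosed K] [CharZero K] [Ring A] [Algebra K A]
    (B : SuperBialgebra K A)
    (hconn : B.A₀ = Submodule.span K {(1 : A)}) :
    ∀ x ∈ B.A₁, ∀ y ∈ B.A₁, x * y = 0 ∧ y * x = 0 := by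
  have odd_mul := connected_superbialgebra_odd_mul_eq_zero_general B.toSuperAlgebra
    (AlgHom.ofLinearMap B.ε B.ε_one B.ε_mul) B.ε_odd hconn
  exact fun x hx y hy => ⟨odd_mul x hx y hy, odd_mul y hy x hx⟩
end

section
/- Let A be a finite-dimensional connected superbialgebra over K (i.e., the even part A₀ equals K·1). Then dim_K A ≤ 2; equivalently, an n-dimensional connected superbialgebra exists only when n < 3. -/
open TensorProduct

/-! Counitality forces every odd element of a connected superbialgebra to be primitive, while
multiplicativity of `ε` forces a product of two odd elements to vanish. Comparing
`Δ (a * b) = 0` with the super product of `Δ a` and `Δ b` leaves `a ⊗ b - b ⊗ a = 0` for all odd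
`a` and `b`, and commuting tensors are proportional: the odd part is at most a line. -/

section CommutingTensors

variable {K V : Type*} [Field K] [AddCommGroup V] [Module K V]

theorem mem_span_singleton_of_tmul_comm {a b : V} (ha : a ≠ 0)
    (hab : a ⊗ₜ[K] b = b ⊗ₜ[K] a) : b ∈ Submodule.span K {a} := by
  obtain ⟨f, hf⟩ : ∃ f : Module.Dual K V, f a = 1 := Module.Projective.exists_dual_eq_one K ha
  have contracted : f a • b = f b • a := by
    simpa using congrArg (fun t => TensorProduct.lid K V (f.rTensor V t)) hab
  rw [hf, one_smul] at contracted
  exact Submodule.mem_span_singleton.2 ⟨f b, contracted.symm⟩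

theorem rank_submodule_le_one_of_tmul_comm {W : Submodule K V}
    (hW : ∀ a ∈ W, ∀ b ∈ W, a ⊗ₜ[K] b = b ⊗ₜ[K] a) : Module.rank K W ≤ 1 := by
  rw [rank_submodule_le_one_iff]
  rcases eq_or_ne W ⊥ with rfl | hne
  · exact ⟨0, zero_mem _, bot_le⟩
  · obtain ⟨a, haW, ha⟩ := W.exists_mem_ne_zero_of_ne_bot hne
    exact ⟨a, haW, fun b hb => mem_span_singleton_of_tmul_comm ha (hW a haW b hb)⟩

end CommutingTensors

namespace SuperAlgebra

variable {K A : Type*} [Field K] [Ring A] [Algebra K A] (S : SuperAlgebra K A) {a b c : A}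

theorem p₀_of_mem_even (ha : a ∈ S.A₀) : S.p₀ a = a :=
  Submodule.projection_apply_of_mem_left S.compl ha

theorem p₁_of_mem_odd (ha : a ∈ S.A₁) : S.p₁ a = a :=
  Submodule.projection_apply_of_mem_left S.compl.symm ha

theorem p₀_of_mem_odd (ha : a ∈ S.A₁) : S.p₀ a = 0 :=
  (Submodule.projection_apply_eq_zero_iff S.compl).2 ha

theorem p₁_of_mem_even (ha : a ∈ S.A₀) : S.p₁ a = 0 :=
  (Submodule.projection_apply_eq_zero_iff S.compl.symm).2 ha

theorem p₀_add_p₁ (a : A) : S.p₀ a + S.p₁ a = a :=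
  Submodule.projection_add_projection_eq_self S.compl a

theorem τ_tmul_of_mem_even_left (ha : a ∈ S.A₀) (b : A) : S.τ (a ⊗ₜ[K] b) = b ⊗ₜ[K] a := by
  simp [τ, S.p₀_of_mem_even ha, S.p₁_of_mem_even ha, ← TensorProduct.add_tmul, S.p₀_add_p₁]

theorem τ_tmul_of_mem_even_right (a : A) (hb : b ∈ S.A₀) : S.τ (a ⊗ₜ[K] b) = b ⊗ₜ[K] a := by
  simp [τ, S.p₀_of_mem_even hb, S.p₁_of_mem_even hb, ← TensorProduct.tmul_add, S.p₀_add_p₁]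

theorem τ_tmul_of_mem_odd (ha : a ∈ S.A₁) (hb : b ∈ S.A₁) :
    S.τ (a ⊗ₜ[K] b) = -(b ⊗ₜ[K] a) := by
  simp [τ, S.p₀_of_mem_odd ha, S.p₁_of_mem_odd ha, S.p₀_of_mem_odd hb, S.p₁_of_mem_odd hb]

theorem superBimul_tmul (a b c d : A) :
    S.superBimul ((a ⊗ₜ[K] b) ⊗ₜ[K] (c ⊗ₜ[K] d)) =
      TensorProduct.map (LinearMap.mulLeft K a) (LinearMap.mulRight K d) (S.τ (b ⊗ₜ[K] c)) := by
  simp only [superBimul, rearr, LinearMap.comp_apply, LinearEquiv.coe_coe,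
    LinearEquiv.trans_apply, TensorProduct.assoc_tmul, TensorProduct.congr_tmul,
    LinearEquiv.refl_apply, TensorProduct.assoc_symm_tmul, TensorProduct.map_tmul,
    LinearMap.id_apply]
  induction S.τ (b ⊗ₜ[K] c) with
  | zero => simp
  | tmul x y => simp
  | add s t hs ht => simp only [TensorProduct.add_tmul, TensorProduct.tmul_add, map_add, hs, ht]

theorem superBimul_tmul_of_mem_even_left (a : A) (hb : b ∈ S.A₀) (c d : A) :
    S.superBimul ((a ⊗ₜ[K] b) ⊗ₜ[K] (c ⊗ₜ[K] d)) = (a * c) ⊗ₜ[K] (b * d) := by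
  simp [superBimul_tmul, S.τ_tmul_of_mem_even_left hb]

theorem superBimul_tmul_of_mem_even_right (a b : A) (hc : c ∈ S.A₀) (d : A) :
    S.superBimul ((a ⊗ₜ[K] b) ⊗ₜ[K] (c ⊗ₜ[K] d)) = (a * c) ⊗ₜ[K] (b * d) := by
  simp [superBimul_tmul, S.τ_tmul_of_mem_even_right b hc]

theorem superBimul_tmul_of_mem_odd (a : A) (hb : b ∈ S.A₁) (hc : c ∈ S.A₁) (d : A) :
    S.superBimul ((a ⊗ₜ[K] b) ⊗ₜ[K] (c ⊗ₜ[K] d)) = -((a * c) ⊗ₜ[K] (b * d)) := by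
  simp [superBimul_tmul, S.τ_tmul_of_mem_odd hb hc]

theorem oddTensor_eq_of_even_eq_span_one (hconn : S.A₀ = Submodule.span K {(1 : A)}) :
    S.oddTensor = S.A₁.map (TensorProduct.mk K A A 1) ⊔
      S.A₁.map ((TensorProduct.mk K A A).flip 1) := by
  change LinearMap.range (TensorProduct.mapIncl S.A₀ S.A₁) ⊔
    LinearMap.range (TensorProduct.mapIncl S.A₁ S.A₀) = _
  rw [TensorProduct.range_mapIncl, TensorProduct.range_mapIncl, hconn,
    Submodule.map₂_span_singleton_eq_map, Submodule.map₂_span_singleton_eq_map_flip]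

end SuperAlgebra

namespace SuperBialgebra

variable {K A : Type*} [Field K] [Ring A] [Algebra K A] (B : SuperBialgebra K A) {a b : A}

/-- Primitive elements of a superbialgebra, relative to the group-like element `1`. -/
def IsPrimitive (a : A) : Prop :=
  B.Δ a = 1 ⊗ₜ[K] a + a ⊗ₜ[K] 1

variable {B}

theorem IsPrimitive.comul_mul_of_mem_odd (ha : B.IsPrimitive a) (hb : B.IsPrimitive b)
    (ha₁ : a ∈ B.A₁) (hb₁ : b ∈ B.A₁) :
    B.Δ (a * b) = 1 ⊗ₜ[K] (a * b) + (a * b) ⊗ₜ[K] 1 + (a ⊗ₜ[K] b - b ⊗ₜ[K] a) := by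
  rw [B.Δ_mul, ha, hb]
  simp only [TensorProduct.add_tmul, TensorProduct.tmul_add, map_add,
    B.superBimul_tmul_of_mem_even_left _ B.one_mem,
    B.superBimul_tmul_of_mem_even_right _ _ B.one_mem,
    B.superBimul_tmul_of_mem_odd _ ha₁ hb₁, one_mul, mul_one]
  abel

variable (B)

theorem isPrimitive_of_mem_odd (hconn : B.A₀ = Submodule.span K {(1 : A)}) (ha : a ∈ B.A₁) :
    B.IsPrimitive a := by
  obtain ⟨x, hx, y, hy, hΔ⟩ : ∃ x ∈ B.A₁, ∃ y ∈ B.A₁, 1 ⊗ₜ[K] x + y ⊗ₜ[K] 1 = B.Δ a := by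
    simpa [B.oddTensor_eq_of_even_eq_span_one hconn, Submodule.mem_sup] using B.Δ_odd a ha
  have x_eq : x = a := by
    simpa [← hΔ, B.ε_one, B.ε_odd y hy] using B.counit_left a
  have y_eq : y = a := by
    simpa [← hΔ, B.ε_one, B.ε_odd x hx] using B.counit_right a
  rw [IsPrimitive, ← hΔ, x_eq, y_eq]

theorem mul_eq_zero_of_mem_odd (hconn : B.A₀ = Submodule.span K {(1 : A)})
    (ha : a ∈ B.A₁) (hb : b ∈ B.A₁) : a * b = 0 := by
  obtain ⟨c, hc⟩ : ∃ c : K, c • (1 : A) = a * b :=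
    Submodule.mem_span_singleton.1 (hconn ▸ B.mul_mem₁₁ a ha b hb)
  have c_eq : c = 0 := by
    simpa [← hc, B.ε_one, B.ε_odd a ha] using B.ε_mul a b
  rw [← hc, c_eq, zero_smul]

theorem tmul_comm_of_mem_odd (hconn : B.A₀ = Submodule.span K {(1 : A)})
    (ha : a ∈ B.A₁) (hb : b ∈ B.A₁) : a ⊗ₜ[K] b = b ⊗ₜ[K] a := by
  have hΔ := (B.isPrimitive_of_mem_odd hconn ha).comul_mul_of_mem_odd
    (B.isPrimitive_of_mem_odd hconn hb) ha hb
  rw [B.mul_eq_zero_of_mem_odd hconn ha hb] at hΔ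
  exact sub_eq_zero.1 (by simpa using hΔ.symm)

end SuperBialgebra

theorem connected_superbialgebra_finrank_le_two_general
    {K A : Type*} [Field K] [Ring A] [Algebra K A] (B : SuperBialgebra K A)
    (hconn : B.A₀ = Submodule.span K {(1 : A)}) : Module.rank K A ≤ 2 := by
  have even_le : Module.rank K B.A₀ ≤ 1 := by
    rw [hconn]
    simpa using rank_span_le (R := K) {(1 : A)}
  have odd_le : Module.rank K B.A₁ ≤ 1 :=
    rank_submodule_le_one_of_tmul_comm fun _ ha _ hb => B.tmul_comm_of_mem_odd hconn ha hb
  calc Module.rank K A = Module.rank K ↥(B.A₀ ⊔ B.A₁) := by rw [B.compl.sup_eq_top, rank_top]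
    _ ≤ Module.rank K B.A₀ + Module.rank K B.A₁ := Submodule.rank_add_le_rank_add_rank _ _
    _ ≤ 1 + 1 := add_le_add even_le odd_le
    _ = 2 := one_add_one_eq_two

/-- a finite-dimensional connected superbialgebra has dimension at most 2. -/
theorem connected_superbialgebra_finrank_le_two
    {K A : Type*} [Field K] [IsAlgClosed K] [CharZero K] [Ring A] [Algebra K A]
    [FiniteDimensional K A]
    (B : SuperBialgebra K A)
    (hconn : B.A₀ = Submodule.span K {(1 : A)}) :
    Module.finrank K A ≤ 2 :=
  Module.finrank_le_of_rank_le (connected_superbialgebra_finrank_le_two_general B hconn)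
end

section
/- Let A be a 3-dimensional superalgebra over K with dim A₀ = 2 and dim A₁ = 1, whose even part A₀ is isomorphic as a K-algebra to K[x]/(x²). Then A is isomorphic as a superalgebra to exactly one of the following two superalgebras, with x even and y odd: A_{1|1} = K[x,y]/(x², y², xy) and A_{1|2} = K[x,y]/(x², y² − x, xy); moreover A_{1|1} and A_{1|2} are not isomorphic as superalgebras. -/
open TensorProduct

/-!
A nilpotent even element acts on the odd line by left and right multiplication as a nilpotent
scalar, hence as zero. So `u y = y u = 0`, and then `y² ∈ A₀ = K ⊕ K u` is killed by `u`, which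
forces `y² = c u`. If `c = 0` this is `A_{1|1}`; otherwise replacing `u` by `x = c u`, with no root
of `c` needed, gives `A_{1|2}`. The two differ in whether all odd elements square to zero.
-/

theorem linearMap_eq_zero_of_isNilpotent_of_finrank_eq_one
    {R M : Type*} [CommSemiring R] [IsReduced R] [StrongRankCondition R]
    [AddCommMonoid M] [Module R M] [Module.Free R M]
    (hM : Module.finrank R M = 1) {f : Module.End R M} (hf : IsNilpotent f) : f = 0 := by
  let scalars : R ≃ₗ[R] Module.End R M := LinearEquiv.smul_id_of_finrank_eq_one hM
  obtain ⟨c, rfl⟩ := scalars.surjective f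
  obtain ⟨n, hn⟩ := hf
  have hpow : scalars (c ^ n) = scalars c ^ n := by
    change c ^ n • (1 : Module.End R M) = (c • 1) ^ n
    rw [smul_pow, one_pow]
  have hc : c ^ n = 0 := scalars.map_eq_zero_iff.1 (hpow.trans hn)
  rw [IsNilpotent.eq_zero ⟨n, hc⟩, map_zero]

theorem mem_span_singleton_of_mem_span_one_pair_of_mul_eq_zero
    {R A : Type*} [CommRing R] [IsDomain R] [Ring A] [Algebra R A] [Module.IsTorsionFree R A]
    {a u : A} (hu : u ≠ 0) (huu : u * u = 0) (ha : a ∈ Submodule.span R {1, u}) (hau : a * u = 0) :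
    a ∈ Submodule.span R {u} := by
  obtain ⟨r, s, rfl⟩ := Submodule.mem_span_pair.1 ha
  have hr : r • u = 0 := by
    simpa only [add_mul, smul_mul_assoc, one_mul, huu, smul_zero, add_zero] using hau
  rw [(smul_eq_zero.1 hr).resolve_right hu, zero_smul, zero_add]
  exact Submodule.smul_mem _ s (Submodule.mem_span_singleton_self u)

theorem eq_span_pair_of_finrank_eq_two
    {K V : Type*} [DivisionRing K] [AddCommGroup V] [Module K V] {p : Submodule K V} {v w : V}
    (hp : Module.finrank K p = 2) (hv : v ∈ p) (hw : w ∈ p)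
    (hvw : LinearIndependent K ![v, w]) : p = Submodule.span K {v, w} := by
  have : Module.Finite K p := Module.finite_of_finrank_pos (by omega)
  refine (Submodule.eq_of_le_of_finrank_eq (Submodule.span_le.2 ?_) ?_).symm
  · exact Set.pair_subset hv hw
  · rw [hp, ← Matrix.range_cons_cons_empty v w ![], finrank_span_eq_card hvw, Fintype.card_fin]

namespace SuperAlgebra

variable {K A : Type*} [Field K] [Ring A] [Algebra K A] {S : SuperAlgebra K A}

theorem even_mul_odd_eq_zero_of_isNilpotent (h1 : Module.finrank K S.A₁ = 1)
    {a y : A} (ha : a ∈ S.A₀) (hnil : IsNilpotent a) (hy : y ∈ S.A₁) : a * y = 0 := by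
  have hmaps : Set.MapsTo (LinearMap.mulLeft K a) S.A₁ S.A₁ := S.mul_mem₀₁ a ha
  have hzero : (LinearMap.mulLeft K a).restrict hmaps = 0 :=
    linearMap_eq_zero_of_isNilpotent_of_finrank_eq_one h1 <|
      Module.End.isNilpotent.restrict hmaps ((LinearMap.isNilpotent_mulLeft_iff K a).2 hnil)
  exact congrArg Subtype.val (LinearMap.congr_fun hzero ⟨y, hy⟩)

theorem odd_mul_even_eq_zero_of_isNilpotent (h1 : Module.finrank K S.A₁ = 1)
    {a y : A} (ha : a ∈ S.A₀) (hnil : IsNilpotent a) (hy : y ∈ S.A₁) : y * a = 0 := by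
  have hmaps : Set.MapsTo (LinearMap.mulRight K a) S.A₁ S.A₁ :=
    fun z hz ↦ S.mul_mem₁₀ z hz a ha
  have hzero : (LinearMap.mulRight K a).restrict hmaps = 0 :=
    linearMap_eq_zero_of_isNilpotent_of_finrank_eq_one h1 <|
      Module.End.isNilpotent.restrict hmaps ((LinearMap.isNilpotent_mulRight_iff K a).2 hnil)
  exact congrArg Subtype.val (LinearMap.congr_fun hzero ⟨y, hy⟩)

/-- The even element `x` and the odd element `y` span `S` together with `1` and satisfy the
relations of `K[x, y]/(x², y² - z, xy)`. The prescribed square `z` is `0` for `A_{1|1}` and `x` for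
`A_{1|2}`. Linear independence of `1, x, y` is not included: where it matters it comes from the
dimensions of the two parts. -/
def IsPresentedBy (S : SuperAlgebra K A) (x y z : A) : Prop :=
  x ∈ S.A₀ ∧ y ∈ S.A₁ ∧ S.A₀ = Submodule.span K {1, x} ∧ S.A₁ = Submodule.span K {y} ∧
    x * x = 0 ∧ x * y = 0 ∧ y * x = 0 ∧ y * y = z

theorem exists_isPresentedBy_smul (h1 : Module.finrank K S.A₁ = 1) {u : A} (hu : u ≠ 0)
    (huu : u * u = 0) (hA₀ : S.A₀ = Submodule.span K {1, u}) :
    ∃ (y : A) (c : K), S.IsPresentedBy u y (c • u) := by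
  obtain ⟨⟨y, hy⟩, hy0, -⟩ := finrank_eq_one_iff'.1 h1
  have hA₁ : S.A₁ = Submodule.span K {y} :=
    eq_span_singleton_of_mem_of_finrank_eq_one h1 hy (Subtype.coe_ne_coe.2 hy0)
  have hu_even : u ∈ S.A₀ := hA₀ ▸ Submodule.subset_span (Set.mem_insert_of_mem 1 rfl)
  have hnil : IsNilpotent u := ⟨2, by rw [sq, huu]⟩
  have huy : u * y = 0 := even_mul_odd_eq_zero_of_isNilpotent h1 hu_even hnil hy
  have hyu : y * u = 0 := odd_mul_even_eq_zero_of_isNilpotent h1 hu_even hnil hy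
  have hyy : y * y ∈ Submodule.span K {u} :=
    mem_span_singleton_of_mem_span_one_pair_of_mul_eq_zero hu huu (hA₀ ▸ S.mul_mem₁₁ y hy y hy)
      (by rw [mul_assoc, hyu, mul_zero])
  obtain ⟨c, hc⟩ := Submodule.mem_span_singleton.1 hyy
  exact ⟨y, c, hu_even, hy, hA₀, hA₁, huu, huy, hyu, hc.symm⟩

namespace IsPresentedBy

variable {x y z : A}

theorem smul_even (h : S.IsPresentedBy x y z) {c : K} (hc : c ≠ 0) :
    S.IsPresentedBy (c • x) y z := by
  obtain ⟨hx, hy, hA₀, hA₁, hxx, hxy, hyx, hyy⟩ := h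
  refine ⟨S.A₀.smul_mem c hx, hy, ?_, hA₁, ?_, ?_, ?_, hyy⟩
  · rw [hA₀, Submodule.span_insert, Submodule.span_insert,
      Submodule.span_singleton_smul_eq hc.isUnit]
  · rw [smul_mul_smul_comm, hxx, smul_zero]
  · rw [smul_mul_assoc, hxy, smul_zero]
  · rw [mul_smul_comm, hyx, smul_zero]

theorem even_ne_zero (h : S.IsPresentedBy x y z) (h0 : Module.finrank K S.A₀ = 2) : x ≠ 0 := by
  rintro rfl
  obtain ⟨-, -, hA₀, -⟩ := h
  have hle : Module.finrank K S.A₀ ≤ 1 := by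
    rw [hA₀, Set.pair_comm, Submodule.span_insert_zero]
    simpa only [Set.toFinset_singleton, Finset.card_singleton] using
      finrank_span_le_card (R := K) ({1} : Set A)
  omega

theorem odd_mul_self_eq_zero (h : S.IsPresentedBy x y 0) {w : A} (hw : w ∈ S.A₁) :
    w * w = 0 := by
  obtain ⟨-, -, -, hA₁, -, -, -, hyy⟩ := h
  obtain ⟨c, rfl⟩ := Submodule.mem_span_singleton.1 (hA₁ ▸ hw)
  rw [smul_mul_smul_comm, hyy, smul_zero]

end IsPresentedBy

end SuperAlgebra

theorem three_dim_superalgebra_even_part_dual_numbers_classification_general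
    {K A : Type*} [Field K] [Ring A] [Algebra K A] (S : SuperAlgebra K A)
    (h0 : Module.finrank K S.A₀ = 2) (h1 : Module.finrank K S.A₁ = 1)
    (heven : ∃ u ∈ S.A₀, u * u = 0 ∧ LinearIndependent K ![(1 : A), u]) :
    Xor (∃ x y : A, S.IsPresentedBy x y 0) (∃ x y : A, S.IsPresentedBy x y x) := by
  refine (xor_iff_or_and_not_and _ _).2 ⟨?exists_presentation, ?not_both⟩
  case exists_presentation =>
    obtain ⟨u, hu, huu, hli⟩ := heven
    obtain ⟨y, c, h⟩ := SuperAlgebra.exists_isPresentedBy_smul h1 (hli.ne_zero 1) huu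
      (eq_span_pair_of_finrank_eq_two h0 S.one_mem hu hli)
    rcases eq_or_ne c 0 with rfl | hc
    · exact .inl ⟨u, y, zero_smul K u ▸ h⟩
    · exact .inr ⟨c • u, y, h.smul_even hc⟩
  case not_both =>
    rintro ⟨⟨x, y, h⟩, x', y', h'⟩
    have hx' : x' ≠ 0 := h'.even_ne_zero h0
    obtain ⟨-, hy', -, -, -, -, -, hyy'⟩ := h'
    exact hx' (hyy' ▸ h.odd_mul_self_eq_zero hy')

/-- classification of the 3-dimensional superalgebras with 2-dimensional
even part isomorphic to `K[x]/(x²)`: exactly one of `A_{1|1} = K[x,y]/(x², y², xy)` and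
`A_{1|2} = K[x,y]/(x², y² - x, xy)`, with `x` even and `y` odd. -/
theorem three_dim_superalgebra_even_part_dual_numbers_classification
    {K A : Type*} [Field K] [IsAlgClosed K] [CharZero K] [Ring A] [Algebra K A]
    (S : SuperAlgebra K A)
    (h0 : Module.finrank K S.A₀ = 2)
    (h1 : Module.finrank K S.A₁ = 1)
    (heven : ∃ u ∈ S.A₀, u * u = 0 ∧ LinearIndependent K ![(1 : A), u]) :
    Xor'
      (∃ x y : A, x ∈ S.A₀ ∧ y ∈ S.A₁ ∧
        S.A₀ = Submodule.span K {1, x} ∧ S.A₁ = Submodule.span K {y} ∧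
        x * x = 0 ∧ x * y = 0 ∧ y * x = 0 ∧ y * y = 0)
      (∃ x y : A, x ∈ S.A₀ ∧ y ∈ S.A₁ ∧
        S.A₀ = Submodule.span K {1, x} ∧ S.A₁ = Submodule.span K {y} ∧
        x * x = 0 ∧ x * y = 0 ∧ y * x = 0 ∧ y * y = x) :=
  three_dim_superalgebra_even_part_dual_numbers_classification_general S h0 h1 heven
end

section
/- Let A be a 3-dimensional superalgebra over K with dim A₀ = 2 and dim A₁ = 1, whose even part A₀ is isomorphic as a K-algebra to K[x]/(x² − x). Then A is isomorphic as a superalgebra to exactly one of the following three pairwise non-isomorphic superalgebras, with x even and y odd: A_{2|1} = K[x,y]/(x² − x, y² − x, xy − y), A_{2|2} = K⟨x,y⟩/(x² − x, y², xy − y, yx), and A_{2|3} = K[x,y]/(x² − x, y², xy − y), where K⟨x,y⟩ denotes the free associative algebra on x and y. -/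
open TensorProduct

/-- The superalgebra `A_{2|1} = K[x,y]/(x² - x, y² - x, xy - y)` (commutative). -/
def IsA21 {K A : Type*} [Field K] [Ring A] [Algebra K A] (S : SuperAlgebra K A) : Prop :=
  ∃ x y : A, x ∈ S.A₀ ∧ y ∈ S.A₁ ∧
    S.A₀ = Submodule.span K {1, x} ∧ S.A₁ = Submodule.span K {y} ∧
    x * x = x ∧ y * y = x ∧ x * y = y ∧ y * x = y

/-- The superalgebra `A_{2|2} = K⟨x,y⟩/(x² - x, y², xy - y, yx)`. -/
def IsA22 {K A : Type*} [Field K] [Ring A] [Algebra K A] (S : SuperAlgebra K A) : Prop :=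
  ∃ x y : A, x ∈ S.A₀ ∧ y ∈ S.A₁ ∧
    S.A₀ = Submodule.span K {1, x} ∧ S.A₁ = Submodule.span K {y} ∧
    x * x = x ∧ y * y = 0 ∧ x * y = y ∧ y * x = 0

/-- The superalgebra `A_{2|3} = K[x,y]/(x² - x, y², xy - y)` (commutative). -/
def IsA23 {K A : Type*} [Field K] [Ring A] [Algebra K A] (S : SuperAlgebra K A) : Prop :=
  ∃ x y : A, x ∈ S.A₀ ∧ y ∈ S.A₁ ∧
    S.A₀ = Submodule.span K {1, x} ∧ S.A₁ = Submodule.span K {y} ∧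
    x * x = x ∧ y * y = 0 ∧ x * y = y ∧ y * x = y

/-!
An idempotent of the even part acts on each side of the odd line `K y` by an idempotent scalar,
that is, by `0` or `1`. Exchanging `u` and `1 - u` yields an idempotent `x` with `x y = y`. Then
`y² = x y²` lies in `x A₀ = K x`, say `y² = c x`. If `y x = 0`, then `y² = y² x = y (y x) = 0`,
which is `A_{2|2}`. If `y x = y`, then either `c = 0`, which is `A_{2|3}`, or dividing `y` by a
square root of `c` gives `y² = x`, which is `A_{2|1}`. Odd squares vanish in `A_{2|2}` and
`A_{2|3}` but not in `A_{2|1}`; even and odd elements commute in `A_{2|3}` but not in `A_{2|2}`.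
-/

section LinearAlgebra

open Submodule

theorem eq_span_range_of_card_eq_finrank {K V ι : Type*} [DivisionRing K] [AddCommGroup V]
    [Module K V] [Fintype ι] {p : Submodule K V} [FiniteDimensional K p] {v : ι → V}
    (hv : ∀ i, v i ∈ p) (hli : LinearIndependent K v)
    (hcard : Fintype.card ι = Module.finrank K p) :
    p = span K (Set.range v) :=
  (eq_of_le_of_finrank_eq (span_le.2 (Set.range_subset_iff.2 hv))
    ((finrank_span_eq_card hli).trans hcard)).symm

theorem span_pair_sub {R M : Type*} [Ring R] [AddCommGroup M] [Module R M] (a b : M) :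
    span R {a, a - b} = span R {a, b} := by
  apply le_antisymm <;> rw [span_le, Set.pair_subset_iff]
  · exact ⟨mem_span_pair.2 ⟨1, 0, by simp⟩, mem_span_pair.2 ⟨1, -1, by simp [sub_eq_add_neg]⟩⟩
  · exact ⟨mem_span_pair.2 ⟨1, 0, by simp⟩, mem_span_pair.2 ⟨1, -1, by simp⟩⟩

theorem apply_eq_zero_or_apply_eq_self {R M : Type*} [Ring R] [IsDomain R] [AddCommGroup M]
    [Module R M] [Module.IsTorsionFree R M] (f : M →ₗ[R] M) {y : M} (hy : f y ∈ span R {y})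
    (hf : f (f y) = f y) : f y = 0 ∨ f y = y := by
  obtain ⟨c, hc⟩ := mem_span_singleton.1 hy
  have hc_smul : c • f y = f y := by rw [← map_smul, hc, hf]
  have : (c - 1) • f y = 0 := by rw [sub_smul, one_smul, hc_smul, sub_self]
  rcases smul_eq_zero.1 this with hc_one | hfy
  · right
    rw [← hc, sub_eq_zero.1 hc_one, one_smul]
  · exact .inl hfy

section Idempotent

variable {R A : Type*} [CommRing R] [IsDomain R] [Ring A] [Algebra R A] [Module.IsTorsionFree R A]
  {e a : A}

theorem idempotent_mul_eq_zero_or_eq_self (he : IsIdempotentElem e)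
    (hea : e * a ∈ span R {a}) : e * a = 0 ∨ e * a = a :=
  apply_eq_zero_or_apply_eq_self (LinearMap.mulLeft R e) hea (he.mul_self_mul a)

theorem mul_idempotent_eq_zero_or_eq_self (he : IsIdempotentElem e)
    (hae : a * e ∈ span R {a}) : a * e = 0 ∨ a * e = a :=
  apply_eq_zero_or_apply_eq_self (LinearMap.mulRight R e) hae (he.mul_mul_self a)

end Idempotent

theorem mem_span_singleton_of_mul_eq_self {R A : Type*} [CommSemiring R] [Semiring A]
    [Algebra R A] {e a : A} (he : IsIdempotentElem e) (ha : a ∈ span R {1, e})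
    (hea : e * a = a) : a ∈ span R {e} := by
  obtain ⟨c, d, hcd⟩ := mem_span_pair.1 ha
  refine mem_span_singleton.2 ⟨c + d, ?_⟩
  rw [← hea, ← hcd, mul_add, mul_smul_comm, mul_smul_comm, mul_one, he.eq, add_smul]

end LinearAlgebra

namespace SuperAlgebra

variable {K A : Type*} [Field K] [Ring A] [Algebra K A] {S : SuperAlgebra K A} {x y : A}

open Submodule

/-- The generators and relations shared by the presentations of `A_{2|1}`, `A_{2|2}` and
`A_{2|3}`; these three differ only in the values of `y * y` and `y * x`. -/
structure IsNormalPair (S : SuperAlgebra K A) (x y : A) : Prop where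
  even_eq : S.A₀ = span K {1, x}
  odd_eq : S.A₁ = span K {y}
  isIdempotentElem : IsIdempotentElem x
  mul_eq : x * y = y

theorem exists_isNormalPair {u : A} (heven : S.A₀ = span K {1, u}) (hu : IsIdempotentElem u)
    (hodd : S.A₁.IsPrincipal) : ∃ x y, S.IsNormalPair x y := by
  obtain ⟨y, hy⟩ := hodd.principal
  have hu_mem : u ∈ S.A₀ := heven ▸ mem_span_of_mem (Set.mem_insert_of_mem _ rfl)
  have huy_mem : u * y ∈ span K {y} :=
    hy ▸ S.mul_mem₀₁ u hu_mem y (hy ▸ mem_span_singleton_self y)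
  rcases idempotent_mul_eq_zero_or_eq_self hu huy_mem with huy | huy
  · exact ⟨1 - u, y, heven.trans (span_pair_sub 1 u).symm, hy, hu.one_sub,
      by rw [sub_mul, one_mul, huy, sub_zero]⟩
  · exact ⟨u, y, heven, hy, hu, huy⟩

namespace IsNormalPair

theorem even_mem (h : S.IsNormalPair x y) : x ∈ S.A₀ :=
  h.even_eq ▸ mem_span_of_mem (Set.mem_insert_of_mem _ rfl)

theorem odd_mem (h : S.IsNormalPair x y) : y ∈ S.A₁ :=
  h.odd_eq ▸ mem_span_singleton_self y

theorem odd_ne_zero (h : S.IsNormalPair x y) (hS : S.A₁ ≠ ⊥) : y ≠ 0 := by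
  rintro rfl
  exact hS (h.odd_eq.trans (span_zero_singleton K))

theorem smul_odd (h : S.IsNormalPair x y) {c : K} (hc : c ≠ 0) : S.IsNormalPair x (c • y) where
  even_eq := h.even_eq
  odd_eq := h.odd_eq.trans (span_singleton_smul_eq hc.isUnit y).symm
  isIdempotentElem := h.isIdempotentElem
  mul_eq := by rw [mul_smul_comm, h.mul_eq]

theorem mul_self_mem_span (h : S.IsNormalPair x y) : y * y ∈ span K {x} :=
  mem_span_singleton_of_mul_eq_self h.isIdempotentElem
    (h.even_eq ▸ S.mul_mem₁₁ y h.odd_mem y h.odd_mem) (by rw [← mul_assoc, h.mul_eq])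

theorem mul_self_eq_zero_of_mul_eq_zero (h : S.IsNormalPair x y) (hyx : y * x = 0) :
    y * y = 0 := by
  obtain ⟨c, hc⟩ := mem_span_singleton.1 h.mul_self_mem_span
  calc
    y * y = y * y * x := by rw [← hc, smul_mul_assoc, h.isIdempotentElem.eq]
    _ = 0 := by rw [mul_assoc, hyx, mul_zero]

theorem mul_self_eq_zero_of_mem_odd (h : S.IsNormalPair x y) (hyy : y * y = 0) {b : A}
    (hb : b ∈ S.A₁) : b * b = 0 := by
  rw [h.odd_eq] at hb
  obtain ⟨c, rfl⟩ := mem_span_singleton.1 hb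
  rw [smul_mul_smul_comm, hyy, smul_zero]

theorem commute_of_mul_eq_self (h : S.IsNormalPair x y) (hyx : y * x = y) {a b : A}
    (ha : a ∈ S.A₀) (hb : b ∈ S.A₁) : Commute a b := by
  rw [h.even_eq] at ha
  rw [h.odd_eq] at hb
  obtain ⟨c, d, rfl⟩ := mem_span_pair.1 ha
  obtain ⟨e, rfl⟩ := mem_span_singleton.1 hb
  have hxy : Commute x y := h.mul_eq.trans hyx.symm
  exact (((Commute.one_left y).smul_left c).add_left (hxy.smul_left d)).smul_right e

end IsNormalPair

theorem isA21_iff : IsA21 S ↔ ∃ x y, S.IsNormalPair x y ∧ y * y = x ∧ y * x = y :=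
  ⟨fun ⟨x, y, _, _, h₀, h₁, hxx, hyy, hxy, hyx⟩ ↦ ⟨x, y, ⟨h₀, h₁, hxx, hxy⟩, hyy, hyx⟩,
    fun ⟨x, y, h, hyy, hyx⟩ ↦ ⟨x, y, h.even_mem, h.odd_mem, h.even_eq, h.odd_eq,
      h.isIdempotentElem, hyy, h.mul_eq, hyx⟩⟩

theorem isA22_iff : IsA22 S ↔ ∃ x y, S.IsNormalPair x y ∧ y * y = 0 ∧ y * x = 0 :=
  ⟨fun ⟨x, y, _, _, h₀, h₁, hxx, hyy, hxy, hyx⟩ ↦ ⟨x, y, ⟨h₀, h₁, hxx, hxy⟩, hyy, hyx⟩,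
    fun ⟨x, y, h, hyy, hyx⟩ ↦ ⟨x, y, h.even_mem, h.odd_mem, h.even_eq, h.odd_eq,
      h.isIdempotentElem, hyy, h.mul_eq, hyx⟩⟩

theorem isA23_iff : IsA23 S ↔ ∃ x y, S.IsNormalPair x y ∧ y * y = 0 ∧ y * x = y :=
  ⟨fun ⟨x, y, _, _, h₀, h₁, hxx, hyy, hxy, hyx⟩ ↦ ⟨x, y, ⟨h₀, h₁, hxx, hxy⟩, hyy, hyx⟩,
    fun ⟨x, y, h, hyy, hyx⟩ ↦ ⟨x, y, h.even_mem, h.odd_mem, h.even_eq, h.odd_eq,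
      h.isIdempotentElem, hyy, h.mul_eq, hyx⟩⟩

theorem IsNormalPair.isA21_or_isA23_of_mul_eq_self (h : S.IsNormalPair x y)
    (hK : ∀ c : K, IsSquare c) (hyx : y * x = y) : IsA21 S ∨ IsA23 S := by
  obtain ⟨c, hc⟩ := mem_span_singleton.1 h.mul_self_mem_span
  obtain ⟨r, rfl⟩ := hK c
  rcases eq_or_ne r 0 with rfl | hr
  · have hyy : y * y = 0 := by rw [← hc, mul_zero, zero_smul]
    exact .inr (isA23_iff.2 ⟨x, y, h, hyy, hyx⟩)
  · refine .inl (isA21_iff.2 ⟨x, r⁻¹ • y, h.smul_odd (inv_ne_zero hr), ?_, ?_⟩)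
    · rw [smul_mul_smul_comm, ← hc, smul_smul, ← mul_inv, inv_mul_cancel₀ (mul_self_ne_zero.2 hr),
        one_smul]
    · rw [smul_mul_assoc, hyx]

theorem IsNormalPair.isA21_or_isA22_or_isA23 (h : S.IsNormalPair x y)
    (hK : ∀ c : K, IsSquare c) : IsA21 S ∨ IsA22 S ∨ IsA23 S := by
  have hyx_mem : y * x ∈ span K {y} := h.odd_eq ▸ S.mul_mem₁₀ y h.odd_mem x h.even_mem
  rcases mul_idempotent_eq_zero_or_eq_self h.isIdempotentElem hyx_mem with hyx | hyx
  · exact .inr (.inl (isA22_iff.2 ⟨x, y, h, h.mul_self_eq_zero_of_mul_eq_zero hyx, hyx⟩))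
  · exact (h.isA21_or_isA23_of_mul_eq_self hK hyx).imp_right .inr

theorem exists_odd_mul_self_ne_zero_of_isA21 (h : IsA21 S) (hS : S.A₁ ≠ ⊥) :
    ∃ b ∈ S.A₁, b * b ≠ 0 := by
  obtain ⟨x, y, hxy, hyy, -⟩ := isA21_iff.1 h
  refine ⟨y, hxy.odd_mem, fun hy ↦ hxy.odd_ne_zero hS ?_⟩
  rw [← hxy.mul_eq, ← hyy, hy, zero_mul]

theorem exists_not_commute_of_isA22 (h : IsA22 S) (hS : S.A₁ ≠ ⊥) :
    ∃ a ∈ S.A₀, ∃ b ∈ S.A₁, ¬Commute a b := by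
  obtain ⟨x, y, hxy, -, hyx⟩ := isA22_iff.1 h
  refine ⟨x, hxy.even_mem, y, hxy.odd_mem, fun hcomm ↦ hxy.odd_ne_zero hS ?_⟩
  rw [← hxy.mul_eq, hcomm.eq, hyx]

theorem not_isA22_of_isA21 (h : IsA21 S) (hS : S.A₁ ≠ ⊥) : ¬IsA22 S := by
  intro h'
  obtain ⟨b, hb, hbb⟩ := exists_odd_mul_self_ne_zero_of_isA21 h hS
  obtain ⟨x, y, hxy, hyy, -⟩ := isA22_iff.1 h'
  exact hbb (hxy.mul_self_eq_zero_of_mem_odd hyy hb)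

theorem not_isA23_of_isA21 (h : IsA21 S) (hS : S.A₁ ≠ ⊥) : ¬IsA23 S := by
  intro h'
  obtain ⟨b, hb, hbb⟩ := exists_odd_mul_self_ne_zero_of_isA21 h hS
  obtain ⟨x, y, hxy, hyy, -⟩ := isA23_iff.1 h'
  exact hbb (hxy.mul_self_eq_zero_of_mem_odd hyy hb)

theorem not_isA23_of_isA22 (h : IsA22 S) (hS : S.A₁ ≠ ⊥) : ¬IsA23 S := by
  intro h'
  obtain ⟨a, ha, b, hb, hab⟩ := exists_not_commute_of_isA22 h hS
  obtain ⟨x, y, hxy, -, hyx⟩ := isA23_iff.1 h'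
  exact hab (hxy.commute_of_mul_eq_self hyx ha hb)

end SuperAlgebra

theorem existsUnique_fin_three {p q r : Prop} (h : p ∨ q ∨ r) (hpq : p → ¬q) (hpr : p → ¬r)
    (hqr : q → ¬r) : ∃! i : Fin 3, ![p, q, r] i := by
  refine existsUnique_of_exists_of_unique ?_ fun i j hi hj ↦ ?_
  · rcases h with hp | hq | hr
    exacts [⟨0, hp⟩, ⟨1, hq⟩, ⟨2, hr⟩]
  · fin_cases i <;> fin_cases j <;> first | rfl | exact absurd hj (by tauto)

theorem three_dim_superalgebra_even_part_KxK_classification_general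
    {K A : Type*} [Field K] [Ring A] [Algebra K A] (hK : ∀ c : K, IsSquare c)
    (S : SuperAlgebra K A)
    (h0 : Module.finrank K S.A₀ = 2)
    (h1 : Module.finrank K S.A₁ = 1)
    (heven : ∃ u ∈ S.A₀, u * u = u ∧ LinearIndependent K ![(1 : A), u]) :
    ∃! i : Fin 3, ![IsA21 S, IsA22 S, IsA23 S] i := by
  obtain ⟨u, hu, huu, hli⟩ := heven
  have : FiniteDimensional K S.A₀ := Module.finite_of_finrank_pos (by omega)
  have : FiniteDimensional K S.A₁ := Module.finite_of_finrank_pos (by omega)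
  have hodd_ne : S.A₁ ≠ ⊥ := Submodule.one_le_finrank_iff.1 h1.ge
  have hodd : S.A₁.IsPrincipal := S.A₁.finrank_le_one_iff_isPrincipal.1 h1.le
  have heven_eq : S.A₀ = Submodule.span K {1, u} := by
    rw [← Matrix.range_cons_cons_empty 1 u ![]]
    exact eq_span_range_of_card_eq_finrank (Fin.forall_fin_two.2 ⟨S.one_mem, hu⟩) hli h0.symm
  obtain ⟨x, y, h⟩ := SuperAlgebra.exists_isNormalPair heven_eq huu hodd
  exact existsUnique_fin_three (h.isA21_or_isA22_or_isA23 hK)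
    (SuperAlgebra.not_isA22_of_isA21 · hodd_ne) (SuperAlgebra.not_isA23_of_isA21 · hodd_ne)
    (SuperAlgebra.not_isA23_of_isA22 · hodd_ne)

/-- classification of the 3-dimensional superalgebras with 2-dimensional
even part isomorphic to `K[x]/(x² - x)`: exactly one of the three pairwise
non-isomorphic superalgebras `A_{2|1}`, `A_{2|2}`, `A_{2|3}`. -/
theorem three_dim_superalgebra_even_part_KxK_classification
    {K A : Type*} [Field K] [IsAlgClosed K] [CharZero K] [Ring A] [Algebra K A]
    (S : SuperAlgebra K A)
    (h0 : Module.finrank K S.A₀ = 2)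
    (h1 : Module.finrank K S.A₁ = 1)
    (heven : ∃ u ∈ S.A₀, u * u = u ∧ LinearIndependent K ![(1 : A), u]) :
    ∃! i : Fin 3, ![IsA21 S, IsA22 S, IsA23 S] i :=
  three_dim_superalgebra_even_part_KxK_classification_general
    IsAlgClosed.exists_eq_mul_self S h0 h1 heven
end
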